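/- Let p₁₀, p₀₁ and p₆₀, p₅₁, p₄₂, p₃₃, p₂₄, p₁₅, p₀₆ be real numbers with p₁₀² + p₀₁² ≠ 0, and set P₁(θ) = p₁₀ cos θ + p₀₁ sin θ and P₆(θ) = Σ_{i+j=6} p_{ij} cosⁱθ sinʲθ. Then the equation dr/dθ = r(P₁(θ) r + P₆(θ) r⁶) has a center at r = 0 if and only if the following four conditions hold: 5(p₆₀ + p₀₆) + p₄₂ + p₂₄ = 0; p₁₀²(p₂₄ − 5p₆₀ + 10p₀₆) − p₁₀p₀₁(5p₅₁ + 5p₁₅ + 3p₃₃) + p₀₁²(p₄₂ − 5p₀₆ + 10p₆₀) = 0; p₁₀⁴(p₂₄ − 3p₆₀ + 12p₀₆) − p₁₀³p₀₁(3p₅₁ + 7p₁₅ + 3p₃₃) − 12p₁₀²p₀₁²(p₆₀ + p₀₆) − p₁₀p₀₁³(3p₁₅ + 7p₅₁ + 3p₃₃) + p₀₁⁴(p₄₂ − 3p₀₆ + 12p₆₀) = 0; and p₆₀p₀₁⁶ − p₅₁p₀₁⁵p₁₀ + p₄₂p₀₁⁴p₁₀² − p₃₃p₀₁³p₁₀³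 + p₂₄p₀₁²p₁₀⁴ − p₁₅p₀₁p₁₀⁵ + p₀₆p₁₀⁶ = 0. -/

import Mathlib

open Real

/-- A 2π-periodic scalar ODE `dr/dθ = F θ r` has a center at `r = 0` if every solution
with `|r 0|` sufficiently small is defined on `[0, 2π]` and satisfies `r (2π) = r 0`. -/
def HasCenterAtZero (F : ℝ → ℝ → ℝ) : Prop :=
  ∃ ε > (0 : ℝ), ∀ r : ℝ → ℝ, |r 0| < ε →
    (∀ θ ∈ Set.Icc (0 : ℝ) (2 * Real.pi), HasDerivAt r (F θ (r θ)) θ) →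
    r (2 * Real.pi) = r 0

lemma poly_coeff_zero (n : ℕ) : ∀ (a : ℕ → ℝ) (K δ : ℝ), 0 < δ →
    (∀ η, 0 < η → η < δ → |∑ k ∈ Finset.range n, a k * η ^ k| ≤ K * η ^ n) →
    ∀ k < n, a k = 0 := by
  induction n with
  | zero => intro a K δ _ _ k hk; omega
  | succ n ih =>
    intro a K δ hδ hb
    have h0 : a 0 = 0 := by
      have hc : Filter.Tendsto (fun η : ℝ => |∑ k ∈ Finset.range (n + 1), a k * η ^ k|)
          (nhdsWithin 0 (Set.Ioi 0)) (nhds |∑ k ∈ Finset.range (n + 1), a k * (0 : ℝ) ^ k|) := by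
        apply Filter.Tendsto.mono_left _ nhdsWithin_le_nhds
        apply Continuous.tendsto
        fun_prop
      have hd : Filter.Tendsto (fun η : ℝ => K * η ^ (n + 1))
          (nhdsWithin 0 (Set.Ioi 0)) (nhds (K * 0 ^ (n + 1))) := by
        apply Filter.Tendsto.mono_left _ nhdsWithin_le_nhds
        apply Continuous.tendsto (f := fun η : ℝ => K * η ^ (n + 1))
        fun_prop
      have := le_of_tendsto_of_tendsto hc hd (by
        filter_upwards [Ioo_mem_nhdsGT hδ] with η hη
        exact hb η hη.1 hη.2)
      rw [Finset.sum_range_succ'] at this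
      simpa using this
    have h1 := ih (fun k => a (k + 1)) K δ hδ (by
      intro η h1 h2
      have h3 := hb η h1 h2
      rw [Finset.sum_range_succ'] at h3
      have h4 : ∑ k ∈ Finset.range n, a (k + 1) * η ^ (k + 1) + a 0 * η ^ 0
          = (∑ k ∈ Finset.range n, a (k + 1) * η ^ k) * η := by
        rw [h0, Finset.sum_mul]
        simp only [zero_mul, add_zero]
        apply Finset.sum_congr rfl
        intros; ring
      rw [h4, abs_mul, abs_of_pos h1, pow_succ, ← mul_assoc] at h3
      exact le_of_mul_le_mul_right h3 h1)
    intro k hk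
    cases k with
    | zero => exact h0
    | succ k => exact h1 k (by omega)

lemma field_lip (u v K M : ℝ) (hu : |u| ≤ K) (hv : |v| ≤ K) (x y : ℝ)
    (hx : |x| ≤ M) (hy : |y| ≤ M) :
    |x * (u * x + v * x ^ 6) - y * (u * y + v * y ^ 6)| ≤ (K * (2 * M + 7 * M ^ 6)) * |x - y| := by
  have hm : max |x| |y| ≤ M := max_le hx hy
  have hm0 : 0 ≤ max |x| |y| := le_max_of_le_left (abs_nonneg x)
  have h2 := abs_pow_sub_pow_le x y 2
  have h7 := abs_pow_sub_pow_le x y 7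
  have h2' : |x ^ 2 - y ^ 2| ≤ |x - y| * (2 * M) := by
    refine h2.trans ?_
    rw [mul_assoc]
    push_cast
    have : max |x| |y| ^ (2 - 1) ≤ M := by simpa using hm
    gcongr
  have h7' : |x ^ 7 - y ^ 7| ≤ |x - y| * (7 * M ^ 6) := by
    refine h7.trans ?_
    rw [mul_assoc]
    push_cast
    have : max |x| |y| ^ (7 - 1) ≤ M ^ 6 := by
      show max |x| |y| ^ 6 ≤ M ^ 6
      gcongr
    gcongr
  have hK : 0 ≤ K := (abs_nonneg u).trans hu
  calc |x * (u * x + v * x ^ 6) - y * (u * y + v * y ^ 6)|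
      = |u * (x ^ 2 - y ^ 2) + v * (x ^ 7 - y ^ 7)| := by congr 1; ring
    _ ≤ |u * (x ^ 2 - y ^ 2)| + |v * (x ^ 7 - y ^ 7)| := abs_add_le _ _
    _ ≤ K * (|x - y| * (2 * M)) + K * (|x - y| * (7 * M ^ 6)) := by
        rw [abs_mul, abs_mul]; gcongr
    _ = _ := by ring

lemma taylor_bound (y z : ℝ) (hy : |y| ≤ 1 / 2) (hz : |z| ≤ 1 / 2) :
    |∑ k ∈ Finset.range 7, ((Nat.choose (k + 4) 4 : ℕ) : ℝ) * z ^ k - (1 / (1 - y)) ^ 5| ≤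
      2310 * |y - z| + 32 * 4159 * |y| ^ 7 := by
  have hy2 := abs_le.1 hy
  have h1 : (1 / 2 : ℝ) ≤ 1 - y := by linarith [hy2.2]
  have hp : 0 < 1 - y := by linarith
  have hT : ∀ w : ℝ, ∑ k ∈ Finset.range 7, ((Nat.choose (k + 4) 4 : ℕ) : ℝ) * w ^ k =
      1 + 5 * w + 15 * w ^ 2 + 35 * w ^ 3 + 70 * w ^ 4 + 126 * w ^ 5 + 210 * w ^ 6 := by
    intro w
    simp [Finset.sum_range_succ, Nat.choose]
    ring
  rw [hT]
  have hinv : (1 / (1 - y)) ^ 5 = 1 + 5 * y + 15 * y ^ 2 + 35 * y ^ 3 + 70 * y ^ 4 + 126 * y ^ 5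
      + 210 * y ^ 6 + (1 / (1 - y)) ^ 5 * (y ^ 7 * (330 - 1155 * y + 1540 * y ^ 2 - 924 * y ^ 3
        + 210 * y ^ 4)) := by
    field_simp
    ring
  have hq : |(1 / (1 - y)) ^ 5 * (y ^ 7 * (330 - 1155 * y + 1540 * y ^ 2 - 924 * y ^ 3
        + 210 * y ^ 4))| ≤ 32 * 4159 * |y| ^ 7 := by
    rw [abs_mul, abs_mul, abs_pow, abs_pow]
    have e1 : |1 / (1 - y)| ^ 5 ≤ 32 := by
      have : |1 / (1 - y)| ≤ 2 := by
        rw [abs_of_pos (by positivity), div_le_iff₀ hp]; linarith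
      calc |1 / (1 - y)| ^ 5 ≤ 2 ^ 5 := by gcongr
        _ = 32 := by norm_num
    have e2 : |330 - 1155 * y + 1540 * y ^ 2 - 924 * y ^ 3 + 210 * y ^ 4| ≤ 4159 := by
      have b1 : |y| ≤ 1 := by linarith
      have b : ∀ n, |y ^ n| ≤ 1 := fun n => by rw [abs_pow]; exact pow_le_one₀ (abs_nonneg _) b1
      have c1 := abs_le.1 b1
      have c2 := abs_le.1 (b 2)
      have c3 := abs_le.1 (b 3)
      have c4 := abs_le.1 (b 4)
      rw [abs_le]; constructor <;> linarith [c1.1, c1.2, c2.1, c2.2, c3.1, c3.2, c4.1, c4.2]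
    calc _ ≤ 32 * (|y| ^ 7 * 4159) := by gcongr
      _ = _ := by ring
  have hk : ∀ k : ℕ, |z ^ k - y ^ k| ≤ |y - z| * k := by
    intro k
    refine (abs_pow_sub_pow_le z y k).trans ?_
    rw [abs_sub_comm z y]
    have : max |z| |y| ^ (k - 1) ≤ 1 :=
      pow_le_one₀ (le_max_of_le_left (abs_nonneg _)) (max_le (by linarith) (by linarith))
    have h0 : 0 ≤ |y - z| * k := by positivity
    nlinarith
  have d1 := abs_le.1 (hk 1)
  have d2 := abs_le.1 (hk 2)
  have d3 := abs_le.1 (hk 3)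
  have d4 := abs_le.1 (hk 4)
  have d5 := abs_le.1 (hk 5)
  have d6 := abs_le.1 (hk 6)
  have dq := abs_le.1 hq
  rw [hinv]
  push_cast at *
  rw [abs_le]
  constructor
  · linarith [d1.1, d2.1, d3.1, d4.1, d5.1, d6.1, dq.2]
  · linarith [d1.2, d2.2, d3.2, d4.2, d5.2, d6.2, dq.1]

lemma picard_in_ball {f : ℝ → ℝ → ℝ} {tmin tmax : ℝ} {t₀ : Set.Icc tmin tmax} {x₀ : ℝ}
    {a L K : NNReal} (hf : IsPicardLindelof f t₀ x₀ a 0 L K) :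
    ∃ α : ℝ → ℝ, α t₀ = x₀ ∧ (∀ t, α t ∈ Metric.closedBall x₀ a) ∧
      ∀ t ∈ Set.Icc tmin tmax, HasDerivWithinAt α (f t (α t)) (Set.Icc tmin tmax) t := by
  obtain ⟨α, hα⟩ := ODE.FunSpace.exists_isFixedPt_next hf
    (Metric.mem_closedBall_self (by simp) : x₀ ∈ Metric.closedBall x₀ ((0 : NNReal) : ℝ))
  refine ⟨α.compProj, by rw [ODE.FunSpace.compProj_val, ← hα, ODE.FunSpace.next_apply₀],
    fun t => α.compProj_mem_closedBall hf.mul_max_le, fun t ht ↦ ?_⟩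
  apply ODE.hasDerivWithinAt_picard_Icc t₀.2 hf.continuousOn_uncurry
    α.continuous_compProj.continuousOn (fun _ ht' ↦ α.compProj_mem_closedBall hf.mul_max_le)
    x₀ ht |>.congr_of_mem _ ht
  intro t' ht'
  nth_rw 1 [← hα]
  rw [ODE.FunSpace.compProj_of_mem ht', ODE.FunSpace.next_apply]

lemma exists_sol (P1 P6 : ℝ → ℝ) (K : ℝ) (hK : 1 ≤ K) (h1 : ∀ θ, |P1 θ| ≤ K)
    (h6 : ∀ θ, |P6 θ| ≤ K) (c1 : Continuous P1) (c6 : Continuous P6) (c : ℝ) (hc : 0 < c)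
    (hcK : 4000 * K * c ≤ 1) :
    ∃ r : ℝ → ℝ, r 0 = c ∧ (∀ θ, |r θ - c| ≤ c / 2) ∧
      ∀ θ ∈ Set.Icc (0 : ℝ) (2 * Real.pi),
        HasDerivAt r (r θ * (P1 θ * r θ + P6 θ * r θ ^ 6)) θ := by
  have hc1 : c ≤ 1 / 4000 := by nlinarith
  have hball : ∀ x ∈ Metric.closedBall c (c / 2), |x| ≤ 2 * c := by
    intro x hx
    rw [Metric.mem_closedBall, Real.dist_eq, abs_le] at hx
    rw [abs_le]; constructor <;> linarith [hx.1, hx.2]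
  have hmem : (0 : ℝ) ∈ Set.Icc (-1 : ℝ) 8 := by constructor <;> norm_num
  have hpl : IsPicardLindelof (fun θ r => r * (P1 θ * r + P6 θ * r ^ 6)) (⟨0, hmem⟩ : Set.Icc (-1 : ℝ) 8) c
      (⟨c / 2, by positivity⟩ : NNReal) 0 (⟨132 * K * c ^ 2, by positivity⟩ : NNReal)
      (⟨K * (2 * (2 * c) + 7 * (2 * c) ^ 6), by positivity⟩ : NNReal) := by
    constructor
    · intro t _
      apply LipschitzOnWith.of_dist_le_mul
      intro x hx y hy
      rw [Real.dist_eq, Real.dist_eq]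
      exact field_lip _ _ _ _ (h1 t) (h6 t) x y (hball x hx) (hball y hy)
    · intro x _
      fun_prop
    · intro t _ x hx
      have hx2 := hball x hx
      rw [Real.norm_eq_abs]
      show _ ≤ 132 * K * c ^ 2
      have e : |x| ^ 5 ≤ 1 := pow_le_one₀ (abs_nonneg _) (by linarith)
      have e2 : |x| ^ 2 ≤ (2 * c) ^ 2 := by gcongr
      calc |x * (P1 t * x + P6 t * x ^ 6)| = |x| ^ 2 * |P1 t + P6 t * x ^ 5| := by
            rw [← abs_pow, ← abs_mul]; congr 1; ring
        _ ≤ |x| ^ 2 * (|P1 t| + |P6 t| * |x| ^ 5) := by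
            gcongr
            refine (abs_add_le _ _).trans ?_
            rw [abs_mul, abs_pow]
        _ ≤ (2 * c) ^ 2 * (K + K * 1) := by
            have := h1 t
            have := h6 t
            gcongr
        _ ≤ _ := by nlinarith [mul_pos (by linarith : 0 < K) (pow_pos hc 2)]
    · show 132 * K * c ^ 2 * max (8 - 0) (0 - (-1)) ≤ c / 2 - 0
      have : max ((8 : ℝ) - 0) (0 - (-1)) = 8 := by norm_num
      rw [this]
      nlinarith
  obtain ⟨α, hα0, hin, hd⟩ := picard_in_ball hpl
  refine ⟨α, hα0, ?_, ?_⟩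
  · intro t
    have := hin t
    rwa [Metric.mem_closedBall, Real.dist_eq] at this
  · intro t ht
    have hpi' := Real.pi_lt_d2
    have ht' : t ∈ Set.Icc (-1 : ℝ) 8 := ⟨by linarith [ht.1], by linarith [ht.2]⟩
    exact (hd t ht').hasDerivAt (Icc_mem_nhds (by linarith [ht.1]) (by linarith [ht.2]))

lemma moments (P1 P6 A : ℝ → ℝ) (K : ℝ) (hK : 1 ≤ K) (h1 : ∀ θ, |P1 θ| ≤ K)
    (h6 : ∀ θ, |P6 θ| ≤ K) (c1 : Continuous P1) (c6 : Continuous P6)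
    (hA : ∀ θ, HasDerivAt A (P1 θ) θ) (hA0 : A 0 = 0) (hA1 : A (2 * Real.pi) = 0) (hAK : ∀ θ, |A θ| ≤ K)
    (hcen : HasCenterAtZero (fun θ r => r * (P1 θ * r + P6 θ * r ^ 6))) :
    ∀ k < 7, ∫ θ in (0 : ℝ)..(2 * Real.pi), P6 θ * A θ ^ k = 0 := by
  obtain ⟨ε, hε, hcen⟩ := hcen
  have cA : Continuous A := continuous_iff_continuousAt.2 fun θ => (hA θ).continuousAt
  have hK0 : 0 < K := by linarith
  have hpi := Real.pi_pos
  have hpi' := Real.pi_lt_d2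
  have key := poly_coeff_zero 7
    (fun k => ((Nat.choose (k + 4) 4 : ℕ) : ℝ) * ∫ θ in (0 : ℝ)..(2 * Real.pi), P6 θ * A θ ^ k)
    (K * (2310 * (K * (128 * 7 * K)) + 32 * 4159 * (2 * K) ^ 7) * (2 * Real.pi))
    (min ε (1 / (4000 * K))) (by positivity) (by
    intro c hc hcm
    have hcε : c < ε := hcm.trans_le (min_le_left _ _)
    have hcK : 4000 * K * c ≤ 1 := by
      have : c ≤ 1 / (4000 * K) := (hcm.trans_le (min_le_right _ _)).le
      rw [le_div_iff₀ (by positivity)] at this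
      linarith
    obtain ⟨r, hr0, hrc, hrd⟩ := exists_sol P1 P6 K hK h1 h6 c1 c6 c hc hcK
    have hper := hcen r (by rw [hr0, abs_of_pos hc]; exact hcε) hrd
    have rpos : ∀ θ, 0 < r θ := fun θ => by
      have := (abs_le.1 (hrc θ)).1; linarith
    have rle : ∀ θ, r θ ≤ 3 / 2 * c := fun θ => by
      have := (abs_le.1 (hrc θ)).2; linarith
    set H : ℝ → ℝ := fun θ => (r θ)⁻¹ + A θ with hH
    have Hlow : ∀ θ, 1 / (2 * c) ≤ H θ := by
      intro θ
      have e1 : (3 / 2 * c)⁻¹ ≤ (r θ)⁻¹ := inv_anti₀ (rpos θ) (rle θ)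
      have e2 := (abs_le.1 (hAK θ)).1
      have e3 : K ≤ 1 / (4000 * c) := by
        rw [le_div_iff₀ (by positivity)]; linarith
      have e4 : 1 / (2 * c) + 1 / (4000 * c) ≤ (3 / 2 * c)⁻¹ := by
        rw [show (3 / 2 * c)⁻¹ = (2 / 3) * c⁻¹ by field_simp,
          show 1 / (2 * c) + 1 / (4000 * c) = (1 / 2 + 1 / 4000) * c⁻¹ by field_simp]
        gcongr
        norm_num
      simp only [hH]
      linarith
    have Hpos : ∀ θ, 0 < H θ := fun θ => lt_of_lt_of_le (by positivity) (Hlow θ)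
    have xle : ∀ θ, (H θ)⁻¹ ≤ 2 * c := by
      intro θ
      rw [inv_le_comm₀ (Hpos θ) (by positivity)]
      simpa using Hlow θ
    have Hd : ∀ θ ∈ Set.Icc (0 : ℝ) (2 * Real.pi), HasDerivAt H (-(P6 θ * r θ ^ 5)) θ := by
      intro θ hθ
      have := ((hrd θ hθ).inv (rpos θ).ne').add (hA θ)
      refine HasDerivAt.congr_deriv (f := H) this ?_
      have := (rpos θ).ne'
      field_simp
      ring
    have Hcont : ContinuousOn H (Set.Icc 0 (2 * Real.pi)) := fun θ hθ =>
      (Hd θ hθ).continuousAt.continuousWithinAt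
    have rcont : ContinuousOn r (Set.Icc 0 (2 * Real.pi)) := fun θ hθ =>
      (hrd θ hθ).continuousAt.continuousWithinAt
    have huIcc : Set.uIcc (0 : ℝ) (2 * Real.pi) = Set.Icc 0 (2 * Real.pi) :=
      Set.uIcc_of_le (by positivity)
    -- bound for x
    have xd : ∀ θ ∈ Set.Icc (0 : ℝ) (2 * Real.pi), |(H θ)⁻¹ - c| ≤ 128 * 7 * K * c ^ 7 := by
      intro θ hθ
      have := Convex.norm_image_sub_le_of_norm_hasDerivWithin_le (C := 128 * K * c ^ 7)
        (f := fun θ => (H θ)⁻¹) (f' := fun θ => -(-(P6 θ * r θ ^ 5)) / H θ ^ 2)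
        (s := Set.Icc (0 : ℝ) (2 * Real.pi)) (x := 0) (y := θ)
        (fun t ht => ((Hd t ht).inv (Hpos t).ne').hasDerivWithinAt)
        (by
          intro t ht
          rw [Real.norm_eq_abs, neg_neg, div_eq_mul_inv, abs_mul, abs_mul, abs_pow, abs_inv,
            abs_pow, ← inv_pow, abs_of_pos (rpos t), abs_of_pos (Hpos t)]
          have e1 := xle t
          have e2 : r t ≤ 2 * c := (rle t).trans (by linarith)
          have e3 := h6 t
          have e4 := (rpos t).le
          have e5 : 0 ≤ (H t)⁻¹ := (inv_pos.2 (Hpos t)).le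
          calc |P6 t| * r t ^ 5 * (H t)⁻¹ ^ 2 ≤ K * (2 * c) ^ 5 * (2 * c) ^ 2 := by gcongr
            _ = _ := by ring)
        (convex_Icc _ _) ⟨le_rfl, by positivity⟩ hθ
      rw [Real.norm_eq_abs, Real.norm_eq_abs] at this
      have h0 : (H 0)⁻¹ = c := by simp [hH, hA0, hr0]
      simp only [h0] at this
      refine this.trans ?_
      rw [sub_zero, abs_of_nonneg hθ.1]
      have : θ ≤ 7 := by linarith [hθ.2]
      calc 128 * K * c ^ 7 * θ ≤ 128 * K * c ^ 7 * 7 := by gcongr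
        _ = _ := by ring
    -- vanishing integral
    have hzero : ∫ θ in (0 : ℝ)..(2 * Real.pi), P6 θ * (H θ * r θ) ^ 5 = 0 := by
      have hint : ContinuousOn (fun θ => P6 θ * (H θ * r θ) ^ 5) (Set.Icc 0 (2 * Real.pi)) :=
        c6.continuousOn.mul ((Hcont.mul rcont).pow 5)
      rw [intervalIntegral.integral_eq_sub_of_hasDerivAt (f := fun θ => -(H θ ^ 6) / 6)]
      · simp [hH, hper, hA0, hA1]
      · intro θ hθ
        rw [huIcc] at hθ
        have := ((Hd θ hθ).pow 6).neg.div_const 6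
        refine HasDerivAt.congr_deriv (f := fun θ => -(H θ ^ 6) / 6) this ?_
        push_cast
        ring
      · apply ContinuousOn.intervalIntegrable
        rwa [huIcc]
    have hint1 : ∀ k : ℕ, IntervalIntegrable (fun θ => P6 θ * A θ ^ k) MeasureTheory.volume
        0 (2 * Real.pi) := fun k => (c6.mul (cA.pow k)).intervalIntegrable _ _
    have hsum : ∑ k ∈ Finset.range 7, (((Nat.choose (k + 4) 4 : ℕ) : ℝ) *
        ∫ θ in (0 : ℝ)..(2 * Real.pi), P6 θ * A θ ^ k) * c ^ k =
        ∫ θ in (0 : ℝ)..(2 * Real.pi),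
          P6 θ * (∑ k ∈ Finset.range 7, ((Nat.choose (k + 4) 4 : ℕ) : ℝ) * (c * A θ) ^ k
            - (H θ * r θ) ^ 5) := by
      simp only [mul_sub]
      rw [intervalIntegral.integral_sub, hzero, sub_zero]
      · simp only [Finset.mul_sum]
        rw [intervalIntegral.integral_finsetSum]
        · apply Finset.sum_congr rfl
          intro k _
          rw [mul_right_comm, ← intervalIntegral.integral_const_mul]
          apply intervalIntegral.integral_congr
          intro θ _
          simp only
          ring
        · intro k _
          apply Continuous.intervalIntegrable
          fun_prop
      · apply Continuous.intervalIntegrable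
        fun_prop
      · apply ContinuousOn.intervalIntegrable
        rw [huIcc]
        exact c6.continuousOn.mul ((Hcont.mul rcont).pow 5)
    rw [hsum, ← Real.norm_eq_abs]
    refine (intervalIntegral.norm_integral_le_of_norm_le_const
      (C := K * (2310 * (K * (128 * 7 * K)) + 32 * 4159 * (2 * K) ^ 7) * c ^ 7) ?_).trans ?_
    · intro θ hθ
      have hθ' : θ ∈ Set.Icc (0 : ℝ) (2 * Real.pi) := by
        rw [Set.uIoc_of_le (by positivity)] at hθ
        exact ⟨hθ.1.le, hθ.2⟩
      have hx := xd θ hθ'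
      have hx2 := xle θ
      have hx0 : 0 < (H θ)⁻¹ := inv_pos.2 (Hpos θ)
      have ha := hAK θ
      have hHr : H θ * r θ = 1 / (1 - (H θ)⁻¹ * A θ) := by
        have e1 := (Hpos θ).ne'
        have e2 := (rpos θ).ne'
        have e3 : H θ - A θ = (r θ)⁻¹ := by simp [hH]
        have e4 : 1 - (H θ)⁻¹ * A θ = (H θ)⁻¹ * (r θ)⁻¹ := by
          rw [← e3]; field_simp
        rw [e4]; field_simp
      have hyb : |(H θ)⁻¹ * A θ| ≤ 2 * c * K := by
        rw [abs_mul, abs_of_pos hx0]; gcongr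
      have hzb : |c * A θ| ≤ c * K := by
        rw [abs_mul, abs_of_pos hc]; gcongr
      have tb := taylor_bound ((H θ)⁻¹ * A θ) (c * A θ) (by nlinarith) (by nlinarith)
      rw [← hHr] at tb
      have hyz : |(H θ)⁻¹ * A θ - c * A θ| ≤ 128 * 7 * K * c ^ 7 * K := by
        rw [← sub_mul, abs_mul]; gcongr
      rw [Real.norm_eq_abs, abs_mul]
      have e6 := h6 θ
      have t2 := tb.trans (show _ ≤ 2310 * (128 * 7 * K * c ^ 7 * K) + 32 * 4159 * (2 * c * K) ^ 7
        by gcongr)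
      calc _ ≤ K * (2310 * (128 * 7 * K * c ^ 7 * K) + 32 * 4159 * (2 * c * K) ^ 7) :=
            mul_le_mul e6 t2 (abs_nonneg _) hK0.le
        _ = _ := by ring
    · rw [sub_zero, abs_of_pos (by positivity)]
      apply le_of_eq
      ring)
  intro k hk
  have := key k hk
  have hch : ((Nat.choose (k + 4) 4 : ℕ) : ℝ) ≠ 0 := by
    exact_mod_cast (Nat.choose_pos (by omega)).ne'
  exact (mul_eq_zero.1 this).resolve_left hch

set_option maxHeartbeats 4000000 in
lemma rot (a b p60 p51 p42 p33 p24 p15 p06 : ℝ) : ∃ q0 q1 q2 q3 q4 q5 q6 : ℝ,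
    (∀ C S c s : ℝ, (a ^ 2 + b ^ 2) * c = a * C - b * S → (a ^ 2 + b ^ 2) * s = b * C + a * S →
      (a ^ 2 + b ^ 2) ^ 6 * (p60 * c ^ 6 + p51 * c ^ 5 * s + p42 * c ^ 4 * s ^ 2 +
        p33 * c ^ 3 * s ^ 3 + p24 * c ^ 2 * s ^ 4 + p15 * c * s ^ 5 + p06 * s ^ 6) =
      q0 * C ^ 6 + q1 * C ^ 5 * S + q2 * C ^ 4 * S ^ 2 + q3 * C ^ 3 * S ^ 3 +
        q4 * C ^ 2 * S ^ 4 + q5 * C * S ^ 5 + q6 * S ^ 6) ∧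
    (a ^ 2 + b ^ 2) ^ 3 * (5 * (p60 + p06) + p42 + p24) = 5 * q0 + 5 * q6 + q2 + q4 ∧
    (a ^ 2 + b ^ 2) ^ 2 * (a ^ 2 * (p24 - 5 * p60 + 10 * p06) - a * b * (5 * p51 + 5 * p15 + 3 * p33) +
         b ^ 2 * (p42 - 5 * p06 + 10 * p60)) = q4 - 5 * q0 + 10 * q6 ∧
    (a ^ 2 + b ^ 2) * (a ^ 4 * (p24 - 3 * p60 + 12 * p06) - a ^ 3 * b * (3 * p51 + 7 * p15 + 3 * p33) -
         12 * a ^ 2 * b ^ 2 * (p60 + p06) - a * b ^ 3 * (3 * p15 + 7 * p51 + 3 * p33) +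
         b ^ 4 * (p42 - 3 * p06 + 12 * p60) + 3 * a ^ 2 * b ^ 2 * (5 * (p60 + p06) + p42 + p24)) =
         q4 - 3 * q0 + 12 * q6 ∧
    p60 * b ^ 6 - p51 * b ^ 5 * a + p42 * b ^ 4 * a ^ 2 -
         p33 * b ^ 3 * a ^ 3 + p24 * b ^ 2 * a ^ 4 - p15 * b * a ^ 5 + p06 * a ^ 6 = q6 := by
  refine ⟨p60 * (1 * a ^ 6 * b ^ 0) +
      p51 * (1 * a ^ 5 * b ^ 1) +
      p42 * (1 * a ^ 4 * b ^ 2) +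
      p33 * (1 * a ^ 3 * b ^ 3) +
      p24 * (1 * a ^ 2 * b ^ 4) +
      p15 * (1 * a ^ 1 * b ^ 5) +
      p06 * (1 * a ^ 0 * b ^ 6),
    p60 * (-6 * a ^ 5 * b ^ 1) +
      p51 * (1 * a ^ 6 * b ^ 0 + -5 * a ^ 4 * b ^ 2) +
      p42 * (2 * a ^ 5 * b ^ 1 + -4 * a ^ 3 * b ^ 3) +
      p33 * (3 * a ^ 4 * b ^ 2 + -3 * a ^ 2 * b ^ 4) +
      p24 * (4 * a ^ 3 * b ^ 3 + -2 * a ^ 1 * b ^ 5) +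
      p15 * (5 * a ^ 2 * b ^ 4 + -1 * a ^ 0 * b ^ 6) +
      p06 * (6 * a ^ 1 * b ^ 5),
    p60 * (15 * a ^ 4 * b ^ 2) +
      p51 * (-5 * a ^ 5 * b ^ 1 + 10 * a ^ 3 * b ^ 3) +
      p42 * (1 * a ^ 6 * b ^ 0 + -8 * a ^ 4 * b ^ 2 + 6 * a ^ 2 * b ^ 4) +
      p33 * (3 * a ^ 5 * b ^ 1 + -9 * a ^ 3 * b ^ 3 + 3 * a ^ 1 * b ^ 5) +
      p24 * (6 * a ^ 4 * b ^ 2 + -8 * a ^ 2 * b ^ 4 + 1 * a ^ 0 * b ^ 6) +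
      p15 * (10 * a ^ 3 * b ^ 3 + -5 * a ^ 1 * b ^ 5) +
      p06 * (15 * a ^ 2 * b ^ 4),
    p60 * (-20 * a ^ 3 * b ^ 3) +
      p51 * (10 * a ^ 4 * b ^ 2 + -10 * a ^ 2 * b ^ 4) +
      p42 * (-4 * a ^ 5 * b ^ 1 + 12 * a ^ 3 * b ^ 3 + -4 * a ^ 1 * b ^ 5) +
      p33 * (1 * a ^ 6 * b ^ 0 + -9 * a ^ 4 * b ^ 2 + 9 * a ^ 2 * b ^ 4 + -1 * a ^ 0 * b ^ 6) +
      p24 * (4 * a ^ 5 * b ^ 1 + -12 * a ^ 3 * b ^ 3 + 4 * a ^ 1 * b ^ 5) +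
      p15 * (10 * a ^ 4 * b ^ 2 + -10 * a ^ 2 * b ^ 4) +
      p06 * (20 * a ^ 3 * b ^ 3),
    p60 * (15 * a ^ 2 * b ^ 4) +
      p51 * (-10 * a ^ 3 * b ^ 3 + 5 * a ^ 1 * b ^ 5) +
      p42 * (6 * a ^ 4 * b ^ 2 + -8 * a ^ 2 * b ^ 4 + 1 * a ^ 0 * b ^ 6) +
      p33 * (-3 * a ^ 5 * b ^ 1 + 9 * a ^ 3 * b ^ 3 + -3 * a ^ 1 * b ^ 5) +
      p24 * (1 * a ^ 6 * b ^ 0 + -8 * a ^ 4 * b ^ 2 + 6 * a ^ 2 * b ^ 4) +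
      p15 * (5 * a ^ 5 * b ^ 1 + -10 * a ^ 3 * b ^ 3) +
      p06 * (15 * a ^ 4 * b ^ 2),
    p60 * (-6 * a ^ 1 * b ^ 5) +
      p51 * (5 * a ^ 2 * b ^ 4 + -1 * a ^ 0 * b ^ 6) +
      p42 * (-4 * a ^ 3 * b ^ 3 + 2 * a ^ 1 * b ^ 5) +
      p33 * (3 * a ^ 4 * b ^ 2 + -3 * a ^ 2 * b ^ 4) +
      p24 * (-2 * a ^ 5 * b ^ 1 + 4 * a ^ 3 * b ^ 3) +
      p15 * (1 * a ^ 6 * b ^ 0 + -5 * a ^ 4 * b ^ 2) +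
      p06 * (6 * a ^ 5 * b ^ 1),
    p60 * (1 * a ^ 0 * b ^ 6) +
      p51 * (-1 * a ^ 1 * b ^ 5) +
      p42 * (1 * a ^ 2 * b ^ 4) +
      p33 * (-1 * a ^ 3 * b ^ 3) +
      p24 * (1 * a ^ 4 * b ^ 2) +
      p15 * (-1 * a ^ 5 * b ^ 1) +
      p06 * (1 * a ^ 6 * b ^ 0),
    ?_, by ring, by ring, by ring, by ring⟩
  intro C S c s hc hs
  calc (a ^ 2 + b ^ 2) ^ 6 * (p60 * c ^ 6 + p51 * c ^ 5 * s + p42 * c ^ 4 * s ^ 2 +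
        p33 * c ^ 3 * s ^ 3 + p24 * c ^ 2 * s ^ 4 + p15 * c * s ^ 5 + p06 * s ^ 6)
      = p60 * ((a ^ 2 + b ^ 2) * c) ^ 6 + p51 * ((a ^ 2 + b ^ 2) * c) ^ 5 * ((a ^ 2 + b ^ 2) * s) +
        p42 * ((a ^ 2 + b ^ 2) * c) ^ 4 * ((a ^ 2 + b ^ 2) * s) ^ 2 +
        p33 * ((a ^ 2 + b ^ 2) * c) ^ 3 * ((a ^ 2 + b ^ 2) * s) ^ 3 +
        p24 * ((a ^ 2 + b ^ 2) * c) ^ 2 * ((a ^ 2 + b ^ 2) * s) ^ 4 +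
        p15 * ((a ^ 2 + b ^ 2) * c) * ((a ^ 2 + b ^ 2) * s) ^ 5 +
        p06 * ((a ^ 2 + b ^ 2) * s) ^ 6 := by ring
    _ = _ := by rw [hc, hs]; ring

lemma sym_unique (P1 P6 : ℝ → ℝ) (K : ℝ) (h1 : ∀ θ, |P1 θ| ≤ K)
    (h6 : ∀ θ, |P6 θ| ≤ K) (m d : ℝ) (hd : 0 ≤ d)
    (s1 : ∀ θ, P1 (2 * m - θ) = -P1 θ) (s6 : ∀ θ, P6 (2 * m - θ) = -P6 θ) (r : ℝ → ℝ)
    (hr : ∀ θ ∈ Set.Icc (m - d) (m + d), HasDerivAt r (r θ * (P1 θ * r θ + P6 θ * r θ ^ 6)) θ) :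
    r (m + d) = r (m - d) := by
  have hK : 0 ≤ K := (abs_nonneg _).trans (h1 0)
  have rcont : ContinuousOn r (Set.Icc (m - d) (m + d)) := fun θ hθ =>
    (hr θ hθ).continuousAt.continuousWithinAt
  obtain ⟨M, hM⟩ := isCompact_Icc.exists_bound_of_continuousOn rcont
  have hM0 : 0 ≤ M := (norm_nonneg _).trans (hM m ⟨by linarith, by linarith⟩)
  have refl_mem : ∀ t ∈ Set.Icc m (m + d), 2 * m - t ∈ Set.Icc (m - d) (m + d) := fun t ht =>
    ⟨by linarith [ht.2], by linarith [ht.1]⟩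
  have self_mem : ∀ t ∈ Set.Icc m (m + d), t ∈ Set.Icc (m - d) (m + d) := fun t ht =>
    ⟨by linarith [ht.1], ht.2⟩
  have gd : ∀ t ∈ Set.Icc m (m + d), HasDerivAt (fun t => r (2 * m - t))
      (r (2 * m - t) * (P1 t * r (2 * m - t) + P6 t * r (2 * m - t) ^ 6)) t := by
    intro t ht
    have h := (hr _ (refl_mem t ht)).comp t ((hasDerivAt_id t).const_sub (2 * m))
    refine HasDerivAt.congr_deriv (f := fun t => r (2 * m - t)) h ?_
    rw [s1, s6]
    ring
  have key := ODE_solution_unique_of_mem_Icc_right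
    (v := fun θ r => r * (P1 θ * r + P6 θ * r ^ 6)) (f := r) (g := fun t => r (2 * m - t))
    (a := m) (b := m + d) (s := fun _ => Metric.closedBall 0 M)
    (K := Real.toNNReal (K * (2 * M + 7 * M ^ 6)))
    (by
      intro t _
      apply LipschitzOnWith.of_dist_le_mul
      intro x hx y hy
      rw [Real.dist_eq, Real.dist_eq, Real.coe_toNNReal _ (by positivity)]
      rw [mem_closedBall_zero_iff] at hx hy
      exact field_lip _ _ _ _ (h1 t) (h6 t) x y hx hy)
    (rcont.mono self_mem)
    (fun t ht => (hr t (self_mem t ⟨ht.1, ht.2.le⟩)).hasDerivWithinAt)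
    (fun t ht => mem_closedBall_zero_iff.2 (hM t (self_mem t ⟨ht.1, ht.2.le⟩)))
    (fun t ht => (gd t ht).continuousAt.continuousWithinAt)
    (fun t ht => (gd t ⟨ht.1, ht.2.le⟩).hasDerivWithinAt)
    (fun t ht => mem_closedBall_zero_iff.2 (hM _ (refl_mem t ⟨ht.1, ht.2.le⟩)))
    (by show r m = r (2 * m - m); congr 1; ring)
  have := key (show m + d ∈ Set.Icc m (m + d) from ⟨by linarith, le_rfl⟩)
  rw [this]
  show r (2 * m - (m + d)) = _
  congr 1
  ring

lemma moments_poly (P6 A : ℝ → ℝ) (c6 : Continuous P6) (cA : Continuous A)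
    (hm : ∀ k < 7, ∫ θ in (0 : ℝ)..(2 * Real.pi), P6 θ * A θ ^ k = 0)
    (g : Polynomial ℝ) (hg : g.natDegree < 7) :
    ∫ θ in (0 : ℝ)..(2 * Real.pi), P6 θ * g.eval (A θ) = 0 := by
  simp only [Polynomial.eval_eq_sum_range' hg, Finset.mul_sum]
  rw [intervalIntegral.integral_finsetSum]
  · apply Finset.sum_eq_zero
    intro k hk
    simp only [mul_left_comm _ (g.coeff k)]
    rw [intervalIntegral.integral_const_mul, hm k (Finset.mem_range.1 hk), mul_zero]
  · intro k _
    apply Continuous.intervalIntegrable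
    fun_prop

lemma bdd_periodic (f : ℝ → ℝ) (hf : Continuous f) (hp : ∀ θ, f (θ + 2 * Real.pi) = f θ) :
    ∃ K, ∀ θ, |f θ| ≤ K := by
  obtain ⟨K, hK⟩ := isCompact_Icc.exists_bound_of_continuousOn
    (hf.continuousOn (s := Set.Icc 0 (2 * Real.pi)))
  refine ⟨K, fun θ => ?_⟩
  obtain ⟨y, hy, hxy⟩ := Function.Periodic.exists_mem_Ico₀ (f := f) hp (by positivity) θ
  rw [hxy]
  exact hK y ⟨hy.1, hy.2.le⟩

theorem septic_center_conditions
    (p10 p01 p60 p51 p42 p33 p24 p15 p06 : ℝ) (h : p10 ^ 2 + p01 ^ 2 ≠ 0)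
    (P1 P6 : ℝ → ℝ)
    (hP1 : ∀ θ, P1 θ = p10 * Real.cos θ + p01 * Real.sin θ)
    (hP6 : ∀ θ, P6 θ = p60 * Real.cos θ ^ 6 + p51 * Real.cos θ ^ 5 * Real.sin θ +
      p42 * Real.cos θ ^ 4 * Real.sin θ ^ 2 + p33 * Real.cos θ ^ 3 * Real.sin θ ^ 3 +
      p24 * Real.cos θ ^ 2 * Real.sin θ ^ 4 + p15 * Real.cos θ * Real.sin θ ^ 5 +
      p06 * Real.sin θ ^ 6) :
    HasCenterAtZero (fun θ r => r * (P1 θ * r + P6 θ * r ^ 6)) ↔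
      (5 * (p60 + p06) + p42 + p24 = 0 ∧
       p10 ^ 2 * (p24 - 5 * p60 + 10 * p06) - p10 * p01 * (5 * p51 + 5 * p15 + 3 * p33) +
         p01 ^ 2 * (p42 - 5 * p06 + 10 * p60) = 0 ∧
       p10 ^ 4 * (p24 - 3 * p60 + 12 * p06) - p10 ^ 3 * p01 * (3 * p51 + 7 * p15 + 3 * p33) -
         12 * p10 ^ 2 * p01 ^ 2 * (p60 + p06) - p10 * p01 ^ 3 * (3 * p15 + 7 * p51 + 3 * p33) +
         p01 ^ 4 * (p42 - 3 * p06 + 12 * p60) = 0 ∧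
       p60 * p01 ^ 6 - p51 * p01 ^ 5 * p10 + p42 * p01 ^ 4 * p10 ^ 2 -
         p33 * p01 ^ 3 * p10 ^ 3 + p24 * p01 ^ 2 * p10 ^ 4 - p15 * p01 * p10 ^ 5 +
         p06 * p10 ^ 6 = 0) := by
  obtain ⟨q0, q1, q2, q3, q4, q5, q6, hq, e1, e2, e3, e4⟩ :=
    rot p10 p01 p60 p51 p42 p33 p24 p15 p06
  have hpi := Real.pi_pos
  set S : ℝ → ℝ := fun θ => p10 * Real.sin θ - p01 * Real.cos θ with hS
  have c1 : Continuous P1 := by rw [funext hP1]; fun_prop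
  have c6 : Continuous P6 := by rw [funext hP6]; fun_prop
  have cS : Continuous S := by rw [hS]; fun_prop
  obtain ⟨K1, hK1⟩ := bdd_periodic P1 c1 (fun θ => by
    rw [hP1, hP1, Real.cos_add_two_pi, Real.sin_add_two_pi])
  obtain ⟨K6, hK6⟩ := bdd_periodic P6 c6 (fun θ => by
    rw [hP6, hP6, Real.cos_add_two_pi, Real.sin_add_two_pi])
  obtain ⟨KA, hKA⟩ := bdd_periodic (fun θ => S θ - S 0) (by fun_prop) (fun θ => by
    simp only [hS]; rw [Real.cos_add_two_pi, Real.sin_add_two_pi])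
  have hCS : ∀ θ, P1 θ ^ 2 = p10 ^ 2 + p01 ^ 2 - S θ ^ 2 := fun θ => by
    rw [hP1]; simp only [hS]
    linear_combination (p10 ^ 2 + p01 ^ 2) * Real.sin_sq_add_cos_sq θ
  have hP6q : ∀ θ, (p10 ^ 2 + p01 ^ 2) ^ 6 * P6 θ = q0 * P1 θ ^ 6 + q1 * P1 θ ^ 5 * S θ +
      q2 * P1 θ ^ 4 * S θ ^ 2 + q3 * P1 θ ^ 3 * S θ ^ 3 +
        q4 * P1 θ ^ 2 * S θ ^ 4 + q5 * P1 θ * S θ ^ 5 + q6 * S θ ^ 6 := fun θ => by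
    rw [hP6]
    apply hq
    · rw [hP1]; simp only [hS]; ring
    · rw [hP1]; simp only [hS]; ring
  obtain ⟨m, hm, hm0⟩ : ∃ m ∈ Set.Icc (0 : ℝ) Real.pi, P1 m = 0 := by
    have h0 : P1 Real.pi = - P1 0 := by rw [hP1, hP1]; simp
    rcases le_total (P1 0) 0 with h1 | h1
    · exact intermediate_value_Icc hpi.le c1.continuousOn ⟨h1, by linarith⟩
    · exact intermediate_value_Icc' hpi.le c1.continuousOn ⟨by linarith, h1⟩
  constructor
  · intro hcen
    have hSd : ∀ θ, HasDerivAt S (P1 θ) θ := fun θ => by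
      rw [hP1]
      have := ((Real.hasDerivAt_sin θ).const_mul p10).sub ((Real.hasDerivAt_cos θ).const_mul p01)
      refine HasDerivAt.congr_deriv (f := S) this ?_
      ring
    have hS2 : S (2 * Real.pi) = S 0 := by simp [hS]
    set K := max 1 (max K1 (max K6 KA)) with hK
    have k1 : K1 ≤ K := by simp [hK]
    have k6 : K6 ≤ K := by simp [hK]
    have kA : KA ≤ K := by simp [hK]
    have hmom := moments P1 P6 (fun θ => S θ - S 0) K (by simp [hK])
      (fun θ => (hK1 θ).trans k1) (fun θ => (hK6 θ).trans k6) c1 c6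
      (fun θ => (hSd θ).sub_const _) (by simp) (by simp [hS2]) (fun θ => (hKA θ).trans kA) hcen
    set E : Polynomial ℝ := Polynomial.C q0 * (Polynomial.C (p10 ^ 2 + p01 ^ 2) - Polynomial.X ^ 2) ^ 3
      + Polynomial.C q2 * (Polynomial.C (p10 ^ 2 + p01 ^ 2) - Polynomial.X ^ 2) ^ 2 * Polynomial.X ^ 2
      + Polynomial.C q4 * (Polynomial.C (p10 ^ 2 + p01 ^ 2) - Polynomial.X ^ 2) * Polynomial.X ^ 4
      + Polynomial.C q6 * Polynomial.X ^ 6 with hE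
    have hEdeg : E.natDegree ≤ 6 := by
      rw [hE]; compute_degree
    have hmom2 := moments_poly P6 (fun θ => S θ - S 0) c6 (by fun_prop) hmom
      (E.comp (Polynomial.X + Polynomial.C (S 0))) (by
        rw [Polynomial.natDegree_comp, Polynomial.natDegree_X_add_C]; omega)
    simp only [Polynomial.eval_comp, Polynomial.eval_add, Polynomial.eval_X, Polynomial.eval_C,
      sub_add_cancel] at hmom2
    set G : Polynomial ℝ := Polynomial.X * (Polynomial.C q1 *
        (Polynomial.C (p10 ^ 2 + p01 ^ 2) - Polynomial.X ^ 2) ^ 2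
      + Polynomial.C q3 * (Polynomial.C (p10 ^ 2 + p01 ^ 2) - Polynomial.X ^ 2) * Polynomial.X ^ 2
      + Polynomial.C q5 * Polynomial.X ^ 4) * E with hG
    have hGint : ∫ θ in (0 : ℝ)..(2 * Real.pi), G.eval (S θ) * P1 θ = 0 := by
      have := intervalIntegral.integral_comp_mul_deriv (a := 0) (b := 2 * Real.pi)
        (f := S) (f' := P1) (g := fun x => G.eval x) (fun x _ => hSd x) c1.continuousOn
        G.continuous
      simp only [Function.comp_def] at this
      rw [this, hS2, intervalIntegral.integral_same]
    have hEval : ∀ θ, E.eval (S θ) = q0 * (P1 θ ^ 2) ^ 3 + q2 * (P1 θ ^ 2) ^ 2 * S θ ^ 2 +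
        q4 * P1 θ ^ 2 * S θ ^ 4 + q6 * S θ ^ 6 := fun θ => by
      rw [hCS]; simp [hE]
    have hsq : ∀ θ, E.eval (S θ) ^ 2 = (p10 ^ 2 + p01 ^ 2) ^ 6 * (P6 θ * E.eval (S θ))
        - G.eval (S θ) * P1 θ := fun θ => by
      have : G.eval (S θ) = S θ * (q1 * (P1 θ ^ 2) ^ 2 + q3 * P1 θ ^ 2 * S θ ^ 2 + q5 * S θ ^ 4)
          * E.eval (S θ) := by
        rw [hCS]; simp [hG]
      rw [this, ← mul_assoc, hP6q, sq]
      nth_rw 1 [hEval]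
      ring
    have cE : Continuous (fun θ => E.eval (S θ)) := E.continuous.comp cS
    have cG : Continuous (fun θ => G.eval (S θ)) := G.continuous.comp cS
    have hint0 : ∫ θ in (0 : ℝ)..(2 * Real.pi), E.eval (S θ) ^ 2 = 0 := by
      simp only [hsq]
      rw [intervalIntegral.integral_sub, hGint, intervalIntegral.integral_const_mul, hmom2]
      · ring
      · exact (continuous_const.mul (c6.mul cE)).intervalIntegrable _ _
      · exact (cG.mul c1).intervalIntegrable _ _
    have hE0 : ∀ θ ∈ Set.Icc (0 : ℝ) (2 * Real.pi), E.eval (S θ) = 0 := by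
      intro θ hθ
      by_contra hne
      have := intervalIntegral.integral_pos (a := 0) (b := 2 * Real.pi)
        (f := fun θ => E.eval (S θ) ^ 2) (by positivity) (cE.pow 2).continuousOn
        (fun x _ => sq_nonneg _) ⟨θ, hθ, by positivity⟩
      linarith
    have hR : 0 < p10 ^ 2 + p01 ^ 2 := lt_of_le_of_ne (by positivity) (Ne.symm h)
    have hval : ∀ φ, 0 ≤ φ → φ ≤ Real.pi / 2 → q0 * (Real.sin φ ^ 2) ^ 3 +
        q2 * (Real.sin φ ^ 2) ^ 2 * Real.cos φ ^ 2 + q4 * Real.sin φ ^ 2 * (Real.cos φ ^ 2) ^ 2 +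
        q6 * (Real.cos φ ^ 2) ^ 3 = 0 := by
      intro φ h0 h1
      have h2 := hE0 (m + φ) ⟨by linarith [hm.1], by linarith [hm.2]⟩
      have hSm : S m ^ 2 = p10 ^ 2 + p01 ^ 2 := by have := hCS m; rw [hm0] at this; linarith
      have t1 : S (m + φ) = S m * Real.cos φ := by
        have := hP1 m
        rw [hm0] at this
        simp only [hS]
        rw [Real.sin_add, Real.cos_add]
        linear_combination -(Real.sin φ) * this
      have t2 : P1 (m + φ) = -(S m * Real.sin φ) := by
        have := hP1 m
        rw [hm0] at this
        rw [hP1, Real.sin_add, Real.cos_add]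
        simp only [hS]
        linear_combination -(Real.cos φ) * this
      rw [hEval, t1, t2] at h2
      have h3 : (S m ^ 2) ^ 3 * (q0 * (Real.sin φ ^ 2) ^ 3 +
        q2 * (Real.sin φ ^ 2) ^ 2 * Real.cos φ ^ 2 + q4 * Real.sin φ ^ 2 * (Real.cos φ ^ 2) ^ 2 +
        q6 * (Real.cos φ ^ 2) ^ 3) = 0 := by rw [← h2]; ring
      rw [hSm] at h3
      exact (mul_eq_zero.1 h3).resolve_left (by positivity)
    have v0 := hval 0 le_rfl (by positivity)
    have v1 := hval (Real.pi / 2) (by positivity) le_rfl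
    have v2 := hval (Real.pi / 4) (by positivity) (by linarith)
    have v3 := hval (Real.pi / 6) (by positivity) (by linarith)
    have z6 : q6 = 0 := by simpa using v0
    have z0 : q0 = 0 := by simpa using v1
    have s2 : Real.sqrt 2 ^ 2 = 2 := Real.sq_sqrt (by norm_num)
    have s3 : Real.sqrt 3 ^ 2 = 3 := Real.sq_sqrt (by norm_num)
    rw [Real.sin_pi_div_four, Real.cos_pi_div_four, div_pow, s2, z0, z6] at v2
    have w1 : ((1:ℝ)/2)^2 = 1/4 := by norm_num
    have w2 : (Real.sqrt 3 / 2)^2 = 3/4 := by rw [div_pow, s3]; norm_num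
    rw [Real.sin_pi_div_six, Real.cos_pi_div_six, w1, w2, z0, z6] at v3
    have z2 : q2 = 0 := by linarith
    have z4 : q4 = 0 := by linarith
    have f1 : 5 * (p60 + p06) + p42 + p24 = 0 := by
      rw [z0, z2, z4, z6] at e1
      exact (mul_eq_zero.1 (e1.trans (by ring))).resolve_left (by positivity)
    refine ⟨f1, ?_, ?_, ?_⟩
    · rw [z0, z4, z6] at e2
      exact (mul_eq_zero.1 (e2.trans (by ring))).resolve_left (by positivity)
    · rw [z0, z4, z6, f1] at e3
      have := (mul_eq_zero.1 (e3.trans (by ring))).resolve_left (by positivity)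
      linarith
    · rw [e4, z6]
  · rintro ⟨f1, f2, f3, f4⟩
    have z6 : q6 = 0 := by rw [← e4, f4]
    rw [f1] at e1 e3
    rw [f2] at e2
    rw [f3] at e3
    have z0 : q0 = 0 := by linarith
    have z4 : q4 = 0 := by linarith
    have z2 : q2 = 0 := by linarith
    have hm1 := hP1 m
    rw [hm0] at hm1
    have hs1' : ∀ ψ, P1 (m + ψ) = -P1 (m - ψ) := by
      intro ψ
      rw [hP1, hP1, Real.cos_add, Real.cos_sub, Real.sin_add, Real.sin_sub]
      linear_combination -2 * Real.cos ψ * hm1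
    have hsS' : ∀ ψ, S (m + ψ) = S (m - ψ) := by
      intro ψ
      simp only [hS]
      rw [Real.cos_add, Real.cos_sub, Real.sin_add, Real.sin_sub]
      linear_combination -2 * Real.sin ψ * hm1
    have hs1 : ∀ θ, P1 (2 * m - θ) = -P1 θ := by
      intro θ
      have := hs1' (m - θ)
      rwa [show m + (m - θ) = 2 * m - θ by ring, show m - (m - θ) = θ by ring] at this
    have hsS : ∀ θ, S (2 * m - θ) = S θ := by
      intro θ
      have := hsS' (m - θ)
      rwa [show m + (m - θ) = 2 * m - θ by ring, show m - (m - θ) = θ by ring] at this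
    have hs6 : ∀ θ, P6 (2 * m - θ) = -P6 θ := by
      intro θ
      have g1 := hP6q (2 * m - θ)
      have g2 := hP6q θ
      rw [hs1, hsS, z0, z2, z4, z6] at g1
      rw [z0, z2, z4, z6] at g2
      apply mul_left_cancel₀ (pow_ne_zero 6 h)
      linear_combination g1 + g2
    have per1 : ∀ θ, P1 (2 * Real.pi + θ) = P1 θ := fun θ => by
      rw [add_comm, hP1, hP1, Real.cos_add_two_pi, Real.sin_add_two_pi]
    have per6 : ∀ θ, P6 (2 * Real.pi + θ) = P6 θ := fun θ => by
      rw [add_comm, hP6, hP6, Real.cos_add_two_pi, Real.sin_add_two_pi]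
    refine ⟨1, one_pos, fun r _ hr => ?_⟩
    have u1 := sym_unique P1 P6 (max K1 K6) (fun θ => (hK1 θ).trans (le_max_left _ _))
      (fun θ => (hK6 θ).trans (le_max_right _ _)) m m hm.1 hs1 hs6 r
      (fun θ hθ => hr θ ⟨by linarith [hθ.1], by linarith [hθ.2, hm.2]⟩)
    have u2 := sym_unique P1 P6 (max K1 K6) (fun θ => (hK1 θ).trans (le_max_left _ _))
      (fun θ => (hK6 θ).trans (le_max_right _ _)) (m + Real.pi) (Real.pi - m) (by linarith [hm.2])
      (fun θ => by rw [← hs1, ← per1 (2 * m - θ)]; congr 1; ring)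
      (fun θ => by rw [← hs6, ← per6 (2 * m - θ)]; congr 1; ring) r
      (fun θ hθ => hr θ ⟨by linarith [hθ.1, hm.1], by linarith [hθ.2]⟩)
    rw [sub_self] at u1
    rw [← u1, show 2 * Real.pi = m + Real.pi + (Real.pi - m) by ring, u2]
    congr 1
    ring
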